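/- Let $\mathcal{X}_\beta$ be the complete metric space of pairs $(E,\mu)$ where $E \subset \mathbb{T}^d$ is compact, $\mu$ is a Borel probability measure with $\mathrm{supp}(\mu) \subset E$, and $\sup_{\xi\neq 0}|\xi|^{\lambda/2}|\hat\mu(\xi)| < \infty$ for every $\lambda \in [0,\beta)$, topologized by the Hausdorff metric on $E$ and the seminorms $\|\mu\|_{M(\lambda)}$. For every closed cube $Q \subset \mathbb{T}^d$, the set $A(Q) = \{(E,\mu) \in \mathcal{X}_\beta : E \cap Q = \emptyset \text{ or } \mu(Q) > 0\}$ is open and dense in $\mathcal{X}_\beta$. Consequently, for quasi-all (comeager-many) $(E,\mu) \in \mathcal{X}_\beta$, $\mathrm{supp}(\mu) = E$. -/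

import Mathlib

open MeasureTheory Complex

noncomputable section

/-- The `d`-dimensional torus `𝕋^d = ℝ^d/ℤ^d`. -/
abbrev Torus (d : ℕ) := Fin d → AddCircle (1:ℝ)

/-- The character `x ↦ e^{2πi ξ·x}` on the torus, for a frequency `ξ ∈ ℤ^d`. -/
noncomputable def ec {d : ℕ} (ξ : Fin d → ℤ) (x : Torus d) : ℂ :=
  (AddCircle.toCircle (∑ j, ξ j • x j) : ℂ)

/-- The Euclidean norm `|ξ|` of a frequency `ξ ∈ ℤ^d`. -/
noncomputable def znorm {d : ℕ} (ξ : Fin d → ℤ) : ℝ :=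
  Real.sqrt (∑ j, ((ξ j : ℝ))^2)

/-- The Fourier coefficient `μ̂(ξ) = ∫ e^{-2πi ξ·x} dμ(x)` of a measure on the torus. -/
noncomputable def mfc {d : ℕ} (μ : Measure (Torus d)) (ξ : Fin d → ℤ) : ℂ :=
  ∫ x, ec (-ξ) x ∂μ

/-- The canonical projection `ℝ^d → 𝕋^d`. -/
def torusCoe {d : ℕ} (x : Fin d → ℝ) : Torus d := fun j => (x j : AddCircle (1:ℝ))

/-- The (closed) support of a measure on the torus. -/
def msupport {d : ℕ} (μ : Measure (Torus d)) : Set (Torus d) :=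
  {x | ∀ U : Set (Torus d), IsOpen U → x ∈ U → μ U ≠ 0}

/-- A pair `(E, μ)` of a set and a measure on the torus. -/
abbrev PairT (d : ℕ) := Set (Torus d) × Measure (Torus d)

/-- Membership in the space `𝒳_β` : `E` compact, `μ` a probability measure supported in `E`
with `‖μ‖_{M(λ)} < ∞` for every `λ ∈ [0,β)`. -/
def memX {d : ℕ} (β : ℝ) (p : PairT d) : Prop :=
  IsCompact p.1 ∧ IsProbabilityMeasure p.2 ∧ msupport p.2 ⊆ p.1 ∧
    ∀ lam : ℝ, 0 ≤ lam → lam < β → ∃ A : ℝ, ∀ ξ : Fin d → ℤ, ξ ≠ 0 →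
      znorm ξ ^ (lam/2) * ‖mfc p.2 ξ‖ ≤ A

/-- Basic neighbourhood relation in `𝒳_β`: Hausdorff distance of the sets `< ε` and the
`M(λ)`-seminorm of the difference of the measures `< ε`. -/
def closeX {d : ℕ} (lam ε : ℝ) (p q : PairT d) : Prop :=
  Metric.hausdorffDist p.1 q.1 < ε ∧
    ∀ ξ : Fin d → ℤ, ξ ≠ 0 → znorm ξ ^ (lam/2) * ‖mfc p.2 ξ - mfc q.2 ξ‖ < ε

/-- Openness in `𝒳_β` (w.r.t. the basic neighbourhoods `closeX`). -/
def IsOpenX {d : ℕ} (β : ℝ) (S : Set (PairT d)) : Prop :=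
  ∀ p, memX β p → p ∈ S → ∃ ε : ℝ, 0 < ε ∧ ∃ lam : ℝ, 0 ≤ lam ∧ lam < β ∧
    ∀ q, memX β q → closeX lam ε p q → q ∈ S

/-- Density in `𝒳_β`. -/
def IsDenseX {d : ℕ} (β : ℝ) (S : Set (PairT d)) : Prop :=
  ∀ p, memX β p → ∀ ε : ℝ, 0 < ε → ∀ lam : ℝ, 0 ≤ lam → lam < β →
    ∃ q, memX β q ∧ q ∈ S ∧ closeX lam ε p q

/-- A closed (axis-parallel) cube in the torus with positive sidelength `< 1`. -/
def IsClosedCube {d : ℕ} (Q : Set (Torus d)) : Prop :=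
  ∃ (a : Fin d → ℝ) (s : ℝ), 0 < s ∧ s < 1 ∧
    Q = {x | ∀ j, ∃ t : ℝ, a j ≤ t ∧ t ≤ a j + s ∧ x j = (t : AddCircle (1:ℝ))}

/-- The set `A(Q) = {(E,μ) : E ∩ Q = ∅ or μ(Q) > 0}`. -/
def AQ {d : ℕ} (Q : Set (Torus d)) : Set (PairT d) :=
  {p | p.1 ∩ Q = ∅ ∨ 0 < p.2 Q}

lemma ec_eq_mFourier {d : ℕ} (ξ : Fin d → ℤ) (x : Torus d) :
    ec ξ x = UnitAddTorus.mFourier ξ x := by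
  have h : ∀ s : Finset (Fin d), ((AddCircle.toCircle (∑ j ∈ s, ξ j • x j) : Circle) : ℂ)
      = ∏ j ∈ s, ((AddCircle.toCircle (ξ j • x j) : Circle) : ℂ) := by
    intro s
    induction s using Finset.induction_on with
    | empty => simp
    | insert a s ha ih =>
      rw [Finset.sum_insert ha, Finset.prod_insert ha, AddCircle.toCircle_add, Circle.coe_mul, ih]
  simp only [ec, h, UnitAddTorus.mFourier, ContinuousMap.coe_mk, fourier_apply]

lemma ec_continuous {d : ℕ} (ξ : Fin d → ℤ) : Continuous (ec ξ) := by
  have : ec ξ = UnitAddTorus.mFourier ξ := by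
    ext x
    exact ec_eq_mFourier ξ x
  rw [this]
  exact (UnitAddTorus.mFourier ξ).continuous

lemma ec_norm {d : ℕ} (ξ : Fin d → ℤ) (x : Torus d) : ‖ec ξ x‖ = 1 := by
  exact Circle.norm_coe _

lemma cont_integrable {d : ℕ} (μ : Measure (Torus d)) [IsFiniteMeasure μ] {f : Torus d → ℂ}
    (hf : Continuous f) : Integrable f μ := by
  exact hf.integrable_of_hasCompactSupport (HasCompactSupport.of_compactSpace f)

lemma mfc_zero {d : ℕ} (μ : Measure (Torus d)) [IsProbabilityMeasure μ] : mfc μ 0 = 1 := by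
  simp [mfc, ec]

lemma mfc_norm_le {d : ℕ} (μ : Measure (Torus d)) [IsProbabilityMeasure μ] (ξ : Fin d → ℤ) :
    ‖mfc μ ξ‖ ≤ 1 := by
  have := norm_integral_le_of_norm_le_const (μ := μ) (f := ec (-ξ)) (C := 1)
    (Filter.Eventually.of_forall fun x => (ec_norm _ x).le)
  simpa [mfc] using this

lemma span_bound {d : ℕ} (μ : Measure (Torus d)) [IsProbabilityMeasure μ] (g : C(Torus d, ℂ))
    (hg : g ∈ Submodule.span ℂ (Set.range (UnitAddTorus.mFourier (d := Fin d)))) :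
    ∃ C : ℝ, 0 ≤ C ∧ ∀ ν : Measure (Torus d), IsProbabilityMeasure ν → ∀ ε : ℝ, 0 < ε →
      (∀ ξ : Fin d → ℤ, ξ ≠ 0 → ‖mfc μ ξ - mfc ν ξ‖ < ε) →
      ‖∫ x, g x ∂μ - ∫ x, g x ∂ν‖ ≤ C * ε := by
  induction hg using Submodule.span_induction with
  | mem g hg =>
    obtain ⟨ξ, rfl⟩ := hg
    refine ⟨1, by norm_num, fun ν hν ε hε h => ?_⟩
    have e : ∀ ρ : Measure (Torus d), ∫ x, UnitAddTorus.mFourier ξ x ∂ρ = mfc ρ (-ξ) := by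
      intro ρ
      simp only [mfc, neg_neg]
      exact integral_congr_ae (Filter.Eventually.of_forall fun x => (ec_eq_mFourier ξ x).symm)
    rw [e, e]
    by_cases h0 : ξ = 0
    · subst h0
      simp [mfc_zero, hε.le]
    · simpa using (h (-ξ) (by simpa using h0)).le
  | zero => exact ⟨0, le_rfl, fun ν hν ε hε h => by simp⟩
  | add f g _ _ hf hg =>
    obtain ⟨C, hC, hf⟩ := hf
    obtain ⟨D, hD, hg⟩ := hg
    refine ⟨C + D, by positivity, fun ν hν ε hε h => ?_⟩
    have h1 := hf ν hν ε hε h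
    have h2 := hg ν hν ε hε h
    simp only [ContinuousMap.add_apply]
    rw [integral_add (cont_integrable μ f.continuous) (cont_integrable μ g.continuous),
      integral_add (cont_integrable ν f.continuous) (cont_integrable ν g.continuous),
      add_sub_add_comm]
    refine (norm_add_le _ _).trans ?_
    linarith
  | smul a f _ hf =>
    obtain ⟨C, hC, hf⟩ := hf
    refine ⟨‖a‖ * C, by positivity, fun ν hν ε hε h => ?_⟩
    have h1 := hf ν hν ε hε h
    simp only [ContinuousMap.smul_apply]
    rw [integral_smul, integral_smul, ← smul_sub, norm_smul, mul_assoc]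
    gcongr

/-- If `μ V > 0` with `V` open, then measures with close Fourier coefficients charge `V`. -/
lemma open_stable {d : ℕ} (μ : Measure (Torus d)) [IsProbabilityMeasure μ] (V : Set (Torus d))
    (hV : IsOpen V) (hμ : 0 < μ V) :
    ∃ ε : ℝ, 0 < ε ∧ ∀ ν : Measure (Torus d), IsProbabilityMeasure ν →
      (∀ ξ : Fin d → ℤ, ξ ≠ 0 → ‖mfc μ ξ - mfc ν ξ‖ < ε) → 0 < ν V := by
  obtain ⟨K, hKV, hK, hμK⟩ := hV.exists_lt_isCompact hμ
  obtain ⟨f, hf0, hf1, hf⟩ := exists_continuous_zero_one_of_isClosed hV.isClosed_compl hK.isClosed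
    (Set.disjoint_left.2 fun x hx hx' => hx (hKV hx'))
  have hfi : ∀ ρ : Measure (Torus d), IsProbabilityMeasure ρ → Integrable f ρ := fun ρ hρ =>
    f.continuous.integrable_of_hasCompactSupport (HasCompactSupport.of_compactSpace f)
  set m : ℝ := ∫ x, f x ∂μ with hm
  have hmpos : 0 < m := by
    have h1 : μ.real K ≤ m := by
      rw [← integral_indicator_one hK.measurableSet]
      refine integral_mono ?_ (hfi μ inferInstance) ?_
      · exact (integrable_const (1:ℝ)).indicator hK.measurableSet
      · intro x
        by_cases hx : x ∈ K
        · simp [hx, hf1 hx]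
        · simp [hx, (hf x).1]
    have h2 : 0 < μ.real K := ENNReal.toReal_pos hμK.ne' (measure_ne_top _ _)
    linarith
  let g : C(Torus d, ℂ) := ⟨fun x => (f x : ℂ), by fun_prop⟩
  have hgm : ∀ ρ : Measure (Torus d), ∫ x, g x ∂ρ = ((∫ x, f x ∂ρ : ℝ) : ℂ) := by
    intro ρ
    exact integral_ofReal
  have hcl : g ∈ closure ((Submodule.span ℂ
      (Set.range (UnitAddTorus.mFourier (d := Fin d))) : Submodule ℂ C(Torus d, ℂ)) :
        Set C(Torus d, ℂ)) := by
    rw [← Submodule.topologicalClosure_coe, UnitAddTorus.span_mFourier_closure_eq_top]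
    trivial
  obtain ⟨P, hP, hgP⟩ := Metric.mem_closure_iff.1 hcl (m / 4) (by positivity)
  obtain ⟨C, hC, hCb⟩ := span_bound μ P hP
  have happ : ∀ ρ : Measure (Torus d), IsProbabilityMeasure ρ →
      ‖∫ x, g x ∂ρ - ∫ x, P x ∂ρ‖ ≤ m / 4 := by
    intro ρ hρ
    rw [← integral_sub (cont_integrable ρ g.continuous) (cont_integrable ρ P.continuous)]
    have := norm_integral_le_of_norm_le_const (μ := ρ) (f := fun x => g x - P x) (C := m / 4)
      (Filter.Eventually.of_forall fun x => by
        rw [← dist_eq_norm]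
        exact (ContinuousMap.dist_apply_le_dist x).trans hgP.le)
    simpa using this
  refine ⟨m / (4 * (C + 1)), by positivity, fun ν hν h => ?_⟩
  by_contra h0
  have h0 : ν V = 0 := by simpa using h0
  have hz : ∫ x, f x ∂ν = 0 := by
    apply integral_eq_zero_of_ae
    have : ∀ᵐ x ∂ν, x ∉ V := by
      rw [ae_iff]
      simpa using h0
    filter_upwards [this] with x hx
    exact hf0 hx
  have h1 := happ μ inferInstance
  have h2 := happ ν hν
  have h3 := hCb ν hν _ (by positivity) h
  rw [hgm, ← hm] at h1
  rw [hgm, hz] at h2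
  have h4 : C * (m / (4 * (C + 1))) ≤ m / 4 := by
    rw [mul_div_assoc', div_le_div_iff₀ (by positivity) (by positivity)]
    nlinarith
  have h5 : ‖(m : ℂ)‖ = m := by simp [abs_of_pos hmpos]
  have h6 : (m : ℂ) = ((m : ℂ) - ∫ x, P x ∂μ) + (∫ x, P x ∂μ - ∫ x, P x ∂ν)
      - (((0:ℝ) : ℂ) - ∫ x, P x ∂ν) := by
    push_cast
    ring
  have h7 : ‖(m : ℂ)‖ ≤ m / 4 + m / 4 + m / 4 := by
    rw [h6]
    refine (norm_sub_le _ _).trans (add_le_add ((norm_add_le _ _).trans (add_le_add h1 ?_)) h2)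
    linarith
  linarith

lemma cesaro_pow (w : ℂ) (hw : ‖w‖ = 1) :
    Filter.Tendsto (fun n : ℕ => (n : ℂ)⁻¹ * ∑ k ∈ Finset.range n, w ^ k) Filter.atTop
      (nhds (if w = 1 then 1 else 0)) := by
  split_ifs with h
  · subst h
    refine tendsto_const_nhds.congr' ?_
    filter_upwards [Filter.eventually_gt_atTop 0] with n hn
    have : (n : ℂ) ≠ 0 := by exact_mod_cast hn.ne'
    simp [this]
  · have hb : ∀ n : ℕ, ‖(n : ℂ)⁻¹ * ∑ k ∈ Finset.range n, w ^ k‖ ≤ (n : ℝ)⁻¹ * (2 / ‖w - 1‖) := by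
      intro n
      rw [geom_sum_eq h, norm_mul, norm_inv, norm_div, Complex.norm_natCast]
      gcongr
      refine (norm_sub_le _ _).trans ?_
      simp [hw]
      norm_num
    refine squeeze_zero_norm hb ?_
    have := (tendsto_inv_atTop_zero.comp (tendsto_natCast_atTop_atTop (R := ℝ))).mul_const
      (2 / ‖w - 1‖)
    simpa using this

lemma znorm_single {d : ℕ} (j : Fin d) (k : ℕ) : znorm (Pi.single j (k : ℤ)) = k := by
  unfold znorm
  rw [Finset.sum_eq_single j]
  · simp
  · intro b _ hb
    simp [Pi.single_eq_of_ne hb]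
  · simp

lemma hyperplane_null {d : ℕ} (β : ℝ) (hβ : 0 < β) (p : PairT d) (hp : memX β p) (j : Fin d)
    (a : AddCircle (1:ℝ)) : p.2 {x | x j = a} = 0 := by
  obtain ⟨-, hpr, -, hdec⟩ := hp
  obtain ⟨A, hA⟩ := hdec (β / 2) (by positivity) (by linarith)
  have hS : MeasurableSet {x : Torus d | x j = a} :=
    (isClosed_eq (continuous_apply j) continuous_const).measurableSet
  let w : Torus d → ℂ := fun x => ((AddCircle.toCircle (a - x j) : Circle) : ℂ)
  have hwc : Continuous w := by
    refine continuous_subtype_val.comp (AddCircle.continuous_toCircle.comp ?_)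
    exact continuous_const.sub (continuous_apply j)
  have hw1 : ∀ x, ‖w x‖ = 1 := fun x => Circle.norm_coe _
  have hweq : ∀ x, w x = 1 ↔ x j = a := by
    intro x
    simp only [w]
    rw [Circle.coe_eq_one, ← AddCircle.toCircle_zero (T := 1),
      (AddCircle.injective_toCircle one_ne_zero).eq_iff, sub_eq_zero, eq_comm]
  have hint : ∀ k : ℕ, ‖∫ x, w x ^ k ∂p.2‖ = ‖mfc p.2 (Pi.single j (k : ℤ))‖ := by
    intro k
    have : ∀ x, w x ^ k = ((AddCircle.toCircle (k • a) : Circle) : ℂ) *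
        ec (-(Pi.single j (k : ℤ))) x := by
      intro x
      have hs : ∑ i, (-(Pi.single j (k : ℤ)) : Fin d → ℤ) i • x i = -(k • x j) := by
        rw [Finset.sum_eq_single j]
        · simp
        · intro b _ hb
          simp [Pi.single_eq_of_ne hb]
        · simp
      rw [ec, hs, ← Circle.coe_mul, ← AddCircle.toCircle_add, ← sub_eq_add_neg, ← smul_sub,
        AddCircle.toCircle_nsmul, Circle.coe_pow]
    simp_rw [this]
    rw [integral_const_mul, norm_mul, Circle.norm_coe, one_mul]
    rfl
  have hlim := tendsto_integral_of_dominated_convergence (μ := p.2)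
    (F := fun n x => (n : ℂ)⁻¹ * ∑ k ∈ Finset.range n, w x ^ k)
    (f := fun x => if w x = 1 then 1 else 0) (fun _ => (1:ℝ))
    (fun n => (Continuous.aestronglyMeasurable (by fun_prop)))
    (integrable_const _) (fun n => Filter.Eventually.of_forall fun x => ?_)
    (Filter.Eventually.of_forall fun x => cesaro_pow (w x) (hw1 x))
  · have hmt : Filter.Tendsto (fun k : ℕ => ‖mfc p.2 (Pi.single j (k : ℤ))‖) Filter.atTop
        (nhds 0) := by
      have hr : Filter.Tendsto (fun k : ℕ => A * (k : ℝ) ^ (-(β / 2 / 2))) Filter.atTop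
          (nhds 0) := by
        have := ((tendsto_rpow_neg_atTop (y := β / 2 / 2) (by positivity)).comp
          (tendsto_natCast_atTop_atTop (R := ℝ))).const_mul A
        simpa using this
      refine squeeze_zero' (Filter.Eventually.of_forall fun _ => norm_nonneg _) ?_ hr
      filter_upwards [Filter.eventually_gt_atTop 0] with k hk
      have h := hA (Pi.single j (k : ℤ)) (by simpa using hk.ne')
      rw [znorm_single] at h
      have hk' : (0:ℝ) < k := by exact_mod_cast hk
      rw [Real.rpow_neg hk'.le, ← div_eq_mul_inv, le_div_iff₀ (by positivity), mul_comm]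
      exact h
    have hz : Filter.Tendsto (fun n : ℕ => ∫ x, (n : ℂ)⁻¹ * ∑ k ∈ Finset.range n, w x ^ k ∂p.2)
        Filter.atTop (nhds 0) := by
      refine squeeze_zero_norm (fun n => ?_) hmt.cesaro
      rw [integral_const_mul, integral_finsetSum _
        (fun k _ => cont_integrable p.2 (f := fun x => w x ^ k) (hwc.pow k)), norm_mul, norm_inv, Complex.norm_natCast]
      gcongr
      refine (norm_sum_le _ _).trans (Finset.sum_le_sum fun k _ => (hint k).le)
    have := tendsto_nhds_unique hlim hz
    simp_rw [hweq] at this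
    have h2 : (fun x : Torus d => if x j = a then (1:ℂ) else 0)
        = Set.indicator {x : Torus d | x j = a} (fun _ => (1:ℂ)) := by
      ext x
      simp [Set.indicator_apply]
    rw [h2, integral_indicator_const _ hS] at this
    have h3 : p.2.real {x | x j = a} = 0 := by simpa using this
    exact (measureReal_eq_zero_iff).1 h3
  · rw [norm_mul, norm_inv, Complex.norm_natCast]
    have : ‖∑ k ∈ Finset.range n, w x ^ k‖ ≤ n := by
      refine (norm_sum_le _ _).trans ?_
      simp [hw1]
    rcases Nat.eq_zero_or_pos n with rfl | hn
    · simp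
    · have hn' : (0:ℝ) < n := by exact_mod_cast hn
      rw [inv_mul_le_iff₀ hn']
      simpa using this

lemma msupport_nonempty {d : ℕ} (μ : Measure (Torus d)) [IsProbabilityMeasure μ] :
    (msupport μ).Nonempty := by
  by_contra h
  rw [Set.not_nonempty_iff_eq_empty] at h
  have : μ Set.univ = 0 := by
    refine measure_null_of_locally_null _ fun x _ => ?_
    have hx : x ∉ msupport μ := by simp [h]
    simp only [msupport, Set.mem_ofPred_eq, not_forall, not_not] at hx
    obtain ⟨U, hU, hxU, h0⟩ := hx
    exact ⟨U, mem_nhdsWithin_of_mem_nhds (hU.mem_nhds hxU), h0⟩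
  simp at this

lemma cube_eq_image {d : ℕ} (a : Fin d → ℝ) (s : ℝ) :
    {x : Torus d | ∀ j, ∃ t : ℝ, a j ≤ t ∧ t ≤ a j + s ∧ x j = (t : AddCircle (1:ℝ))}
      = torusCoe '' Set.Icc a (fun j => a j + s) := by
  ext x
  constructor
  · intro h
    choose t h1 h2 h3 using h
    exact ⟨t, ⟨h1, h2⟩, by ext j; exact (h3 j).symm⟩
  · rintro ⟨t, ⟨h1, h2⟩, rfl⟩ j
    exact ⟨t j, h1 j, h2 j, rfl⟩

lemma torusCoe_continuous {d : ℕ} : Continuous (torusCoe (d := d)) := by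
  refine continuous_pi fun j => ?_
  exact (AddCircle.continuous_mk' 1).comp (continuous_apply j)

lemma cube_compact {d : ℕ} {Q : Set (Torus d)} (hQ : IsClosedCube Q) : IsCompact Q := by
  obtain ⟨a, s, -, -, rfl⟩ := hQ
  rw [cube_eq_image]
  exact isCompact_Icc.image torusCoe_continuous

lemma AQ_open {d : ℕ} (β : ℝ) (hβ : 0 < β) {Q : Set (Torus d)} (hQ : IsClosedCube Q) :
    IsOpenX β (AQ Q) := by
  intro p hp hpQ
  have hpr := hp.2.1
  rcases hpQ with hE | hpos
  · obtain ⟨δ, hδ, hdis⟩ := (Set.disjoint_iff_inter_eq_empty.2 hE).exists_thickenings hp.1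
      (cube_compact hQ).isClosed
    refine ⟨δ, hδ, 0, le_rfl, hβ, fun q hq hc => Or.inl ?_⟩
    have hqr := hq.2.1
    by_contra hne
    obtain ⟨y, hyq, hyQ⟩ := Set.nonempty_iff_ne_empty.2 hne
    obtain ⟨x, hx, hxy⟩ := Metric.exists_dist_lt_of_hausdorffDist_lt' hyq hc.1
      (Metric.hausdorffEDist_ne_top_of_nonempty_of_bounded
        ((msupport_nonempty p.2).mono hp.2.2.1) ((msupport_nonempty q.2).mono hq.2.2.1)
        hp.1.isBounded hq.1.isBounded)
    exact Set.disjoint_left.1 hdis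
      (Metric.mem_thickening_iff.2 ⟨x, hx, by rwa [dist_comm]⟩)
      (Metric.self_subset_thickening hδ _ hyQ)
  · obtain ⟨a, s, hs, hs1, rfl⟩ := hQ
    let V : Set (Torus d) := Set.pi Set.univ
      (fun j => (fun t : ℝ => (t : AddCircle (1:ℝ))) '' Set.Ioo (a j) (a j + s))
    have hV : IsOpen V := isOpen_set_pi Set.finite_univ fun j _ =>
      QuotientAddGroup.isOpenMap_coe _ isOpen_Ioo
    have hVQ : V ⊆ {x : Torus d | ∀ j, ∃ t : ℝ, a j ≤ t ∧ t ≤ a j + s ∧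
        x j = (t : AddCircle (1:ℝ))} := by
      intro x hx j
      obtain ⟨t, ht, htx⟩ := hx j trivial
      exact ⟨t, ht.1.le, ht.2.le, htx.symm⟩
    have hVpos : 0 < p.2 V := by
      rw [pos_iff_ne_zero]
      intro h0
      refine hpos.ne' (measure_mono_null (t := V ∪ ⋃ j, ({x | x j = (a j : AddCircle (1:ℝ))} ∪
        {x | x j = ((a j + s : ℝ) : AddCircle (1:ℝ))})) ?_ ?_)
      · intro x hx
        by_contra hn
        simp only [Set.mem_union, Set.mem_iUnion, Set.mem_ofPred_eq, not_or, not_exists] at hn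
        refine hn.1 fun j _ => ?_
        obtain ⟨t, h1, h2, h3⟩ := hx j
        refine ⟨t, ⟨lt_of_le_of_ne h1 ?_, lt_of_le_of_ne h2 ?_⟩, h3.symm⟩
        · rintro h
          exact (hn.2 j).1 (by rw [h3, h])
        · rintro h
          exact (hn.2 j).2 (by rw [h3, h])
      · refine measure_union_null h0 (measure_iUnion_null fun j => measure_union_null ?_ ?_)
        · exact hyperplane_null β hβ p hp j _
        · exact hyperplane_null β hβ p hp j _
    obtain ⟨ε, hε, h⟩ := open_stable p.2 V hV hVpos
    refine ⟨ε, hε, 0, le_rfl, hβ, fun q hq hc => Or.inr ?_⟩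
    refine (h q.2 hq.2.1 fun ξ hξ => ?_).trans_le (measure_mono hVQ)
    simpa using hc.2 ξ hξ

lemma ec_torusCoe {d : ℕ} (ξ : Fin d → ℤ) (y : Fin d → ℝ) :
    ec ξ (torusCoe y) = ∏ j, Complex.exp ((2 * Real.pi * ξ j * y j : ℝ) * I) := by
  rw [ec_eq_mFourier]
  simp only [UnitAddTorus.mFourier, ContinuousMap.coe_mk]
  refine Finset.prod_congr rfl fun j _ => ?_
  rw [torusCoe, fourier_coe_apply]
  congr 1
  push_cast
  ring

lemma factor_norm (k : ℤ) (b δ : ℝ) (hδ : 0 < δ) :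
    ‖∫ u in Set.Icc (0:ℝ) 1, Complex.exp ((2 * Real.pi * k * (b + δ * u) : ℝ) * I)‖ ≤ 1 ∧
    (k ≠ 0 → ‖∫ u in Set.Icc (0:ℝ) 1, Complex.exp ((2 * Real.pi * k * (b + δ * u) : ℝ) * I)‖
      ≤ 1 / (δ * |(k:ℝ)|)) := by
  constructor
  · have := norm_integral_le_of_norm_le_const (μ := volume.restrict (Set.Icc (0:ℝ) 1))
      (f := fun u : ℝ => Complex.exp ((2 * Real.pi * k * (b + δ * u) : ℝ) * I)) (C := 1)
      (Filter.Eventually.of_forall fun x => (Complex.norm_exp_ofReal_mul_I _).le)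
    simpa using this
  · intro hk
    have hk' : (k : ℝ) ≠ 0 := by exact_mod_cast hk
    set c : ℂ := ((2 * Real.pi * k * δ : ℝ) : ℂ) * I with hc
    have hc0 : c ≠ 0 := by
      rw [hc]
      refine mul_ne_zero ?_ I_ne_zero
      have : (2 * Real.pi * k * δ : ℝ) ≠ 0 := by positivity
      exact_mod_cast this
    have hcn : ‖c‖ = 2 * Real.pi * |(k:ℝ)| * δ := by
      rw [hc, norm_mul, norm_I, mul_one, Complex.norm_real, Real.norm_eq_abs, abs_mul, abs_mul,
        abs_of_pos hδ, abs_of_pos (by positivity : (0:ℝ) < 2 * Real.pi)]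
    have e : ∀ u : ℝ, Complex.exp ((2 * Real.pi * k * (b + δ * u) : ℝ) * I)
        = Complex.exp ((2 * Real.pi * k * b : ℝ) * I) * Complex.exp (c * u) := by
      intro u
      rw [← Complex.exp_add, hc]
      congr 1
      push_cast
      ring
    simp_rw [e]
    rw [integral_const_mul, norm_mul, Complex.norm_exp_ofReal_mul_I, one_mul,
      integral_Icc_eq_integral_Ioc, ← intervalIntegral.integral_of_le zero_le_one,
      integral_exp_mul_complex hc0, norm_div, hcn]
    have hn : ∀ u : ℝ, ‖Complex.exp (c * u)‖ = 1 := by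
      intro u
      have : c * u = ((2 * Real.pi * k * δ * u : ℝ) : ℂ) * I := by
        rw [hc]
        push_cast
        ring
      rw [this, Complex.norm_exp_ofReal_mul_I]
    have h2 : ‖Complex.exp (c * ((1:ℝ):ℂ)) - Complex.exp (c * ((0:ℝ):ℂ))‖ ≤ 2 := by
      refine (norm_sub_le _ _).trans ?_
      rw [hn, hn]
      norm_num
    have hka : 0 < |(k:ℝ)| := abs_pos.2 hk'
    rw [div_le_div_iff₀ (by positivity) (by positivity)]
    have hpi := Real.pi_gt_three
    have hkd : 0 < |(k:ℝ)| * δ := by positivity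
    nlinarith

lemma znorm_le {d : ℕ} (ξ : Fin d → ℤ) (M : ℝ) (hM : 0 ≤ M) (h : ∀ j, |(ξ j : ℝ)| ≤ M) :
    znorm ξ ≤ d * M := by
  have h1 : ∑ j, ((ξ j : ℝ))^2 ≤ (∑ j, |(ξ j : ℝ)|)^2 := by
    have := Finset.sum_sq_le_sq_sum_of_nonneg (s := Finset.univ) (f := fun j => |(ξ j : ℝ)|)
      (fun i _ => abs_nonneg _)
    simpa using this
  refine (Real.sqrt_le_sqrt h1).trans ?_
  rw [Real.sqrt_sq (Finset.sum_nonneg fun i _ => abs_nonneg _)]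
  refine (Finset.sum_le_sum fun j _ => h j).trans ?_
  simp

lemma one_le_znorm {d : ℕ} (ξ : Fin d → ℤ) (h : ξ ≠ 0) : 1 ≤ znorm ξ := by
  obtain ⟨j, hj⟩ := Function.ne_iff.1 h
  have h1 : (1:ℝ) ≤ (ξ j : ℝ)^2 := by
    have : (1:ℤ) ≤ (ξ j)^2 := by
      have : 0 < (ξ j)^2 := by
        have : ξ j ≠ 0 := hj
        positivity
      omega
    exact_mod_cast this
  refine Real.one_le_sqrt.2 (h1.trans ?_)
  exact Finset.single_le_sum (f := fun j => ((ξ j : ℝ))^2) (fun i _ => sq_nonneg _)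
    (Finset.mem_univ j)

lemma bump {d : ℕ} (hd : 0 < d) (b : Fin d → ℝ) (δ : ℝ) (hδ : 0 < δ) (K : Set (Torus d))
    (hK : IsClosed K)
    (h : ∀ u : Fin d × Fin d → ℝ, (∀ i, u i ∈ Set.Icc (0:ℝ) 1) →
      torusCoe (fun j => ∑ i, (b j + δ * u (j, i))) ∈ K) :
    ∃ ν : Measure (Torus d), IsProbabilityMeasure ν ∧ ν Kᶜ = 0 ∧
      ∃ A : ℝ, ∀ ξ : Fin d → ℤ, ξ ≠ 0 → znorm ξ ^ d * ‖mfc ν ξ‖ ≤ A := by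
  let ρ : Measure ℝ := volume.restrict (Set.Icc (0:ℝ) 1)
  have hρ : IsProbabilityMeasure ρ := ⟨by simp [ρ]⟩
  let P : Measure (Fin d × Fin d → ℝ) := Measure.pi (fun _ => ρ)
  let φ : (Fin d × Fin d → ℝ) → Torus d := fun u =>
    torusCoe (fun j => ∑ i, (b j + δ * u (j, i)))
  have hφ : Continuous φ := torusCoe_continuous.comp (by fun_prop)
  refine ⟨P.map φ, Measure.isProbabilityMeasure_map hφ.measurable.aemeasurable, ?_, ?_⟩
  · rw [Measure.map_apply hφ.measurable hK.isOpen_compl.measurableSet]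
    have hae : ∀ᵐ u ∂P, ∀ i, u i ∈ Set.Icc (0:ℝ) 1 := by
      rw [ae_all_iff]
      intro i
      have : ∀ᵐ t ∂ρ, t ∈ Set.Icc (0:ℝ) 1 := ae_restrict_mem measurableSet_Icc
      exact (Measure.quasiMeasurePreserving_eval (fun _ => ρ) i).ae this
    have : ∀ᵐ u ∂P, ¬ (u ∈ φ ⁻¹' Kᶜ) := by
      filter_upwards [hae] with u hu hn
      exact hn (h u hu)
    exact measure_eq_zero_iff_ae_notMem.2 this
  · have hm : ∀ ξ : Fin d → ℤ, mfc (P.map φ) ξ = ∏ p : Fin d × Fin d,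
        ∫ u in Set.Icc (0:ℝ) 1,
          Complex.exp ((2 * Real.pi * ((-ξ p.1 : ℤ) : ℝ) * (b p.1 + δ * u) : ℝ) * I) := by
      intro ξ
      rw [mfc, integral_map hφ.measurable.aemeasurable (ec_continuous _).aestronglyMeasurable]
      rw [← integral_fintype_prod_eq_prod (𝕜 := ℂ) (μ := fun _ : Fin d × Fin d => ρ)
        (f := fun (p : Fin d × Fin d) (u : ℝ) =>
          Complex.exp ((2 * Real.pi * ((-ξ p.1 : ℤ) : ℝ) * (b p.1 + δ * u) : ℝ) * I))]
      refine integral_congr_ae (Filter.Eventually.of_forall fun u => ?_)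
      simp only [φ]
      rw [ec_torusCoe, Fintype.prod_prod_type]
      refine Finset.prod_congr rfl fun j _ => ?_
      rw [← Complex.exp_sum]
      congr 1
      rw [← Finset.sum_mul, ← Complex.ofReal_sum, Finset.mul_sum]
      rfl
    refine ⟨(d / δ) ^ d, fun ξ hξ => ?_⟩
    obtain ⟨j, -, hj⟩ := Finset.exists_max_image Finset.univ (fun j => |(ξ j : ℝ)|)
      ⟨⟨0, hd⟩, Finset.mem_univ _⟩
    have hz := znorm_le ξ |(ξ j : ℝ)| (abs_nonneg _) (fun i => hj i (Finset.mem_univ _))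
    have h1 := one_le_znorm ξ hξ
    have hdp : (0:ℝ) < d := by exact_mod_cast hd
    have hjpos : 0 < |(ξ j : ℝ)| := by
      by_contra hn
      have : |(ξ j : ℝ)| = 0 := le_antisymm (not_lt.1 hn) (abs_nonneg _)
      rw [this] at hz
      linarith
    have hj0 : -ξ j ≠ 0 := by
      have : (ξ j : ℝ) ≠ 0 := abs_pos.1 hjpos
      have : ξ j ≠ 0 := by exact_mod_cast this
      simpa using this
    have hb : ‖mfc (P.map φ) ξ‖ ≤ (1 / (δ * |(ξ j : ℝ)|)) ^ d := by
      rw [hm, norm_prod, Fintype.prod_prod_type]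
      rw [← Finset.mul_prod_erase Finset.univ _ (Finset.mem_univ j)]
      refine (mul_le_of_le_one_right (Finset.prod_nonneg fun i _ => norm_nonneg _) ?_).trans ?_
      · refine Finset.prod_le_one (fun i _ => Finset.prod_nonneg fun i _ => norm_nonneg _)
          fun i _ => Finset.prod_le_one (fun i _ => norm_nonneg _)
          fun i' _ => (factor_norm _ _ _ hδ).1
      · have hf := (factor_norm (-ξ j) (b j) δ hδ).2 hj0
        dsimp only
        rw [Finset.prod_const, Finset.card_univ, Fintype.card_fin]
        refine pow_le_pow_left₀ (norm_nonneg _) ?_ d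
        simpa using hf
    calc znorm ξ ^ d * ‖mfc (P.map φ) ξ‖
        ≤ (d * |(ξ j : ℝ)|) ^ d * (1 / (δ * |(ξ j : ℝ)|)) ^ d := by
          gcongr
      _ = (d / δ) ^ d := by
          rw [← mul_pow]
          congr 1
          field_simp

lemma mix_mfc {d : ℕ} (μ ν : Measure (Torus d)) [IsProbabilityMeasure μ] [IsProbabilityMeasure ν]
    (r : ℝ) (h0 : 0 < r) (h1 : r < 1) (ξ : Fin d → ℤ) :
    mfc (ENNReal.ofReal (1 - r) • μ + ENNReal.ofReal r • ν) ξ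
      = ((1 - r : ℝ) : ℂ) * mfc μ ξ + (r : ℂ) * mfc ν ξ := by
  unfold mfc
  rw [integral_add_measure ((cont_integrable μ (ec_continuous _)).smul_measure (by simp))
    ((cont_integrable ν (ec_continuous _)).smul_measure (by simp)), integral_smul_measure,
    integral_smul_measure, ENNReal.toReal_ofReal (by linarith), ENNReal.toReal_ofReal h0.le]
  simp

lemma AQ_dense {d : ℕ} (hd : 0 < d) (β : ℝ) (hβd : β ≤ d) {Q : Set (Torus d)}
    (hQ : IsClosedCube Q) : IsDenseX β (AQ Q) := by
  intro p hp ε hε lam hlam hlamβ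
  have hpr := hp.2.1
  by_cases hE : p.1 ∩ Q = ∅
  · refine ⟨p, hp, Or.inl hE, ?_, ?_⟩
    · simpa using hε
    · intro ξ _
      simpa using hε
  have hQc := cube_compact hQ
  obtain ⟨x₀, hx₀, hx₀Q⟩ := Set.nonempty_iff_ne_empty.2 hE
  obtain ⟨a, s, hs, hs1, hQe⟩ := hQ
  have hx₀Q' := hx₀Q
  rw [hQe] at hx₀Q'
  choose t ht1 ht2 ht3 using hx₀Q'
  have hdp : (0:ℝ) < d := by exact_mod_cast hd
  set η : ℝ := min ε s / 2 with hη
  have hηpos : 0 < η := by positivity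
  have hηε : η < ε := by
    have := min_le_left ε s
    linarith
  have hηs : η ≤ s / 2 := by
    have := min_le_right ε s
    linarith
  let c : Fin d → ℝ := fun j => if t j ≤ a j + s / 2 then t j else t j - η
  have hc : ∀ j, a j ≤ c j ∧ c j + η ≤ a j + s ∧ t j - η ≤ c j ∧ c j ≤ t j := by
    intro j
    have h1 := ht1 j
    have h2 := ht2 j
    simp only [c]
    split_ifs with h
    · refine ⟨h1, by linarith, by linarith, le_rfl⟩
    · push Not at h
      refine ⟨by linarith, by linarith, le_rfl, by linarith⟩
  let K : Set (Torus d) := Q ∩ Metric.closedBall x₀ η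
  have hK : IsCompact K := hQc.inter_right Metric.isClosed_closedBall
  obtain ⟨ν, hν, hνK, A, hA⟩ := bump hd (fun j => c j / d) (η / d) (by positivity) K hK.isClosed
    (by
      intro u hu
      have hy : ∀ j, c j ≤ ∑ i, (c j / d + η / d * u (j, i)) ∧
          ∑ i, (c j / d + η / d * u (j, i)) ≤ c j + η := by
        intro j
        rw [Finset.sum_add_distrib, ← Finset.mul_sum]
        simp only [Finset.sum_const, Finset.card_univ, Fintype.card_fin, nsmul_eq_mul]
        rw [mul_div_cancel₀ _ hdp.ne']
        have h0 : 0 ≤ ∑ i, u (j, i) := Finset.sum_nonneg fun i _ => (hu _).1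
        have h1 : ∑ i, u (j, i) ≤ d := by
          refine (Finset.sum_le_sum fun i _ => (hu (j, i)).2).trans ?_
          simp
        have h2 : η / d * ∑ i, u (j, i) ≤ η / d * d := by gcongr
        rw [div_mul_cancel₀ _ hdp.ne'] at h2
        have h3 : 0 ≤ η / d * ∑ i, u (j, i) := by positivity
        constructor <;> linarith
      refine ⟨?_, ?_⟩
      · rw [hQe]
        intro j
        have h1 := hy j
        have h2 := hc j
        exact ⟨_, by linarith, by linarith, rfl⟩
      · rw [Metric.mem_closedBall, dist_pi_le_iff hηpos.le]
        intro j
        rw [ht3 j, dist_eq_norm, torusCoe, ← AddCircle.coe_sub]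
        refine (QuotientAddGroup.norm_mk_le_norm).trans ?_
        have h1 := hy j
        have h2 := hc j
        rw [Real.norm_eq_abs, abs_le]
        constructor <;> linarith)
  -- polynomial bound for every exponent below β
  have hpow : ∀ l : ℝ, 0 ≤ l → l < β → ∀ ξ : Fin d → ℤ, ξ ≠ 0 →
      znorm ξ ^ (l / 2) * ‖mfc ν ξ‖ ≤ A := by
    intro l hl hlβ ξ hξ
    refine le_trans ?_ (hA ξ hξ)
    gcongr
    rw [← Real.rpow_natCast]
    exact Real.rpow_le_rpow_of_exponent_le (one_le_znorm ξ hξ) (by linarith)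
  have hA0 : 0 ≤ A := by
    have hne : (Pi.single ⟨0, hd⟩ 1 : Fin d → ℤ) ≠ 0 := by simp
    refine le_trans ?_ (hA _ hne)
    have := one_le_znorm _ hne
    positivity
  obtain ⟨B, hB⟩ := hp.2.2.2 lam hlam hlamβ
  set r : ℝ := min (1 / 2) (ε / (2 * (A + |B| + 1))) with hr
  have hr0 : 0 < r := by positivity
  have hr1 : r < 1 := by
    have := min_le_left (1 / 2) (ε / (2 * (A + |B| + 1)))
    rw [← hr] at this
    linarith
  have hr2 : r * (A + |B| + 1) ≤ ε / 2 := by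
    have := min_le_right (1 / 2) (ε / (2 * (A + |B| + 1)))
    rw [← hr, le_div_iff₀ (by positivity)] at this
    linarith
  let σ : Measure (Torus d) := ENNReal.ofReal (1 - r) • p.2 + ENNReal.ofReal r • ν
  refine ⟨(p.1 ∪ K, σ), ⟨hp.1.union hK, ?_, ?_, ?_⟩, Or.inr ?_, ?_, ?_⟩
  · constructor
    simp only [σ, Measure.add_apply, Measure.smul_apply, measure_univ, smul_eq_mul, mul_one]
    rw [← ENNReal.ofReal_add (by linarith) hr0.le]
    simp
  · intro x hx
    by_contra hn
    simp only [Set.mem_union, not_or] at hn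
    have hx' : x ∉ msupport p.2 := fun hh => hn.1 (hp.2.2.1 hh)
    simp only [msupport, Set.mem_ofPred_eq, not_forall, not_not] at hx'
    obtain ⟨U, hU, hxU, h0⟩ := hx'
    refine hx (U ∩ Kᶜ) (hU.inter hK.isClosed.isOpen_compl) ⟨hxU, hn.2⟩ ?_
    simp only [σ, Measure.add_apply, Measure.smul_apply, smul_eq_mul]
    rw [measure_mono_null Set.inter_subset_left h0, measure_mono_null Set.inter_subset_right hνK]
    simp
  · intro l hl hlβ
    obtain ⟨B', hB'⟩ := hp.2.2.2 l hl hlβ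
    refine ⟨(1 - r) * B' + r * A, fun ξ hξ => ?_⟩
    have h1 := hB' ξ hξ
    have h2 := hpow l hl hlβ ξ hξ
    have hz : 0 ≤ znorm ξ ^ (l / 2) := Real.rpow_nonneg (Real.sqrt_nonneg _) _
    simp only [σ]
    rw [mix_mfc _ _ r hr0 hr1]
    have h3 : ‖((1 - r : ℝ) : ℂ) * mfc p.2 ξ + (r : ℂ) * mfc ν ξ‖
        ≤ (1 - r) * ‖mfc p.2 ξ‖ + r * ‖mfc ν ξ‖ := by
      refine (norm_add_le _ _).trans ?_
      rw [norm_mul, norm_mul, Complex.norm_real, Complex.norm_real, Real.norm_eq_abs,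
        Real.norm_eq_abs, abs_of_pos hr0, abs_of_pos (by linarith : 0 < 1 - r)]
    have h4 := mul_le_mul_of_nonneg_left h3 hz
    have h5 := mul_le_mul_of_nonneg_left h1 (by linarith : 0 ≤ 1 - r)
    have h6 := mul_le_mul_of_nonneg_left h2 hr0.le
    linarith
  · have hνQ : ν Q ≠ 0 := by
      intro h0
      have : ν Set.univ = 0 := by
        refine measure_mono_null (t := Q ∪ Kᶜ) ?_ (measure_union_null h0 hνK)
        intro x _
        by_cases hx : x ∈ K
        · exact Or.inl hx.1
        · exact Or.inr hx
      simp at this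
    rw [pos_iff_ne_zero]
    simp only [σ, Measure.add_apply, Measure.smul_apply, smul_eq_mul]
    intro h0
    have := (add_eq_zero.1 h0).2
    rcases mul_eq_zero.1 this with h | h
    · rw [ENNReal.ofReal_eq_zero] at h
      linarith
    · exact hνQ h
  · refine lt_of_le_of_lt (Metric.hausdorffDist_le_of_mem_dist hηpos.le ?_ ?_) hηε
    · intro x hx
      exact ⟨x, Or.inl hx, by simpa using hηpos.le⟩
    · rintro x (hx | hx)
      · exact ⟨x, hx, by simpa using hηpos.le⟩
      · exact ⟨x₀, hx₀, hx.2⟩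
  · intro ξ hξ
    have h1 := hB ξ hξ
    have h2 := hpow lam hlam hlamβ ξ hξ
    have hz : 0 ≤ znorm ξ ^ (lam / 2) := Real.rpow_nonneg (Real.sqrt_nonneg _) _
    simp only [σ]
    rw [mix_mfc _ _ r hr0 hr1]
    have e : mfc p.2 ξ - (((1 - r : ℝ) : ℂ) * mfc p.2 ξ + (r : ℂ) * mfc ν ξ)
        = (r : ℂ) * (mfc p.2 ξ - mfc ν ξ) := by
      push_cast
      ring
    rw [e, norm_mul, Complex.norm_real, Real.norm_eq_abs, abs_of_pos hr0]
    have h3 := mul_le_mul_of_nonneg_left (norm_sub_le (mfc p.2 ξ) (mfc ν ξ)) hz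
    have h4 : znorm ξ ^ (lam / 2) * ‖mfc p.2 ξ - mfc ν ξ‖ ≤ A + |B| + 1 := by
      have := le_abs_self B
      linarith
    have h5 := mul_le_mul_of_nonneg_left h4 hr0.le
    linarith

lemma exists_rat_cube {d : ℕ} (x : Torus d) (U : Set (Torus d)) (hU : IsOpen U) (hx : x ∈ U) :
    ∃ (a : Fin d → ℚ) (n : ℕ),
      x ∈ {x : Torus d | ∀ j, ∃ t : ℝ, (a j : ℝ) ≤ t ∧ t ≤ (a j : ℝ) + 1 / ((n : ℝ) + 2) ∧
        x j = (t : AddCircle (1:ℝ))} ∧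
      {x : Torus d | ∀ j, ∃ t : ℝ, (a j : ℝ) ≤ t ∧ t ≤ (a j : ℝ) + 1 / ((n : ℝ) + 2) ∧
        x j = (t : AddCircle (1:ℝ))} ⊆ U := by
  obtain ⟨ε, hε, hball⟩ := Metric.isOpen_iff.1 hU x hx
  obtain ⟨n, hn⟩ := exists_nat_one_div_lt hε
  have hn2 : (1:ℝ) / ((n : ℝ) + 2) < ε := by
    refine lt_of_le_of_lt ?_ hn
    gcongr
    norm_num
  have hpos : (0:ℝ) < 1 / ((n : ℝ) + 2) := by positivity
  have hlift : ∀ j, ∃ t : ℝ, x j = (t : AddCircle (1:ℝ)) := fun j => by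
    obtain ⟨t, ht⟩ := QuotientAddGroup.mk_surjective (x j)
    exact ⟨t, ht.symm⟩
  choose t ht using hlift
  have hq : ∀ j, ∃ q : ℚ, t j - 1 / ((n : ℝ) + 2) < q ∧ (q : ℝ) < t j := fun j =>
    exists_rat_btwn (by linarith)
  choose a ha1 ha2 using hq
  refine ⟨a, n, fun j => ⟨t j, (ha2 j).le, by linarith [ha1 j], ht j⟩, fun y hy => hball ?_⟩
  rw [Metric.mem_ball, dist_pi_lt_iff hε]
  intro j
  obtain ⟨r, h1, h2, h3⟩ := hy j
  rw [h3, ht j, dist_eq_norm, ← AddCircle.coe_sub]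
  refine lt_of_le_of_lt (QuotientAddGroup.norm_mk_le_norm) ?_
  have h4 := ha1 j
  have h5 := ha2 j
  refine lt_of_le_of_lt ?_ hn2
  rw [Real.norm_eq_abs, abs_le]
  constructor <;> linarith

/-- For every closed cube `Q ⊆ 𝕋^d`, the set `A(Q)` is open and dense in
`𝒳_β`; consequently, the set `{(E,μ) ∈ 𝒳_β : supp(μ) = E}` is comeager, i.e. contains a
countable intersection of open dense sets. -/
theorem stmt13 (d : ℕ) (hd : 0 < d) (β : ℝ) (hβ0 : 0 < β) (hβd : β ≤ d) :
    (∀ Q : Set (Torus d), IsClosedCube Q → IsOpenX β (AQ Q) ∧ IsDenseX β (AQ Q)) ∧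
    ∃ S : ℕ → Set (PairT d), (∀ n, IsOpenX β (S n) ∧ IsDenseX β (S n)) ∧
      ∀ p : PairT d, memX β p → (∀ n, p ∈ S n) → msupport p.2 = p.1 := by
  have hmain : ∀ Q : Set (Torus d), IsClosedCube Q → IsOpenX β (AQ Q) ∧ IsDenseX β (AQ Q) :=
    fun Q hQ => ⟨AQ_open β hβ0 hQ, AQ_dense hd β hβd hQ⟩
  refine ⟨hmain, ?_⟩
  obtain ⟨F, hF⟩ := exists_surjective_nat ((Fin d → ℚ) × ℕ)
  let C : (Fin d → ℚ) × ℕ → Set (Torus d) := fun z =>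
    {x : Torus d | ∀ j, ∃ t : ℝ, (z.1 j : ℝ) ≤ t ∧ t ≤ (z.1 j : ℝ) + 1 / ((z.2 : ℝ) + 2) ∧
        x j = (t : AddCircle (1:ℝ))}
  have hC : ∀ z, IsClosedCube (C z) := by
    intro z
    refine ⟨fun j => (z.1 j : ℝ), 1 / ((z.2 : ℝ) + 2), by positivity, ?_, rfl⟩
    rw [div_lt_one (by positivity)]
    have : (0:ℝ) ≤ z.2 := Nat.cast_nonneg _
    linarith
  refine ⟨fun n => AQ (C (F n)), fun n => hmain _ (hC _), fun p hp hall => ?_⟩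
  refine Set.Subset.antisymm hp.2.2.1 fun x hx U hU hxU => ?_
  obtain ⟨a, m, hxa, hsub⟩ := exists_rat_cube x U hU hxU
  obtain ⟨n, hn⟩ := hF (a, m)
  have h := hall n
  simp only [hn] at h
  rcases h with h | h
  · exact absurd (show x ∈ p.1 ∩ C (a, m) from ⟨hx, hxa⟩) (by rw [h]; simp)
  · exact (h.trans_le (measure_mono hsub)).ne'
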